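/- The set Ω := {w ∈ W_ext : ℓ(w) = 0} is a subgroup of W_ext, the affine Weyl group W_aff is a normal subgroup of W_ext, the multiplication map Ω × W_aff → W_ext is a bijection (so W_ext = Ω ⋉ W_aff), and conjugation by any element of Ω preserves the set S_aff (in particular ℓ(ω w ω⁻¹) = ℓ(w) for all ω ∈ Ω, w ∈ W_aff). -/

import Mathlib

open scoped Classical TensorProduct

noncomputable section

namespace SemiInf

/-- The data of a root datum together with its (finite) Weyl group:
finite-rank free `ℤ`-modules `X` and `Y` with a pairing, a finite group `W`
acting on both, a finite set of roots with a subset of positive roots, and a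
coroot map. The axioms are collected in `Ctx.IsRootDatum`. -/
structure Ctx where
  X : Type
  Y : Type
  [addX : AddCommGroup X]
  [addY : AddCommGroup Y]
  W : Type
  [grpW : Group W]
  [finW : Fintype W]
  [actX : DistribMulAction W X]
  [actY : DistribMulAction W Y]
  pair : Y →+ X →+ ℤ
  roots : Finset X
  pos : Finset X
  coroot : X → Y

attribute [instance] Ctx.addX Ctx.addY Ctx.grpW Ctx.finW Ctx.actX Ctx.actY

namespace Ctx

variable (C : Ctx)

/-- The axioms of a root datum (free finite-rank lattices, perfect pairing,
finite reduced crystallographic root system with a system of positive roots),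
with `W` its Weyl group acting faithfully on `X` and `Y`. -/
structure IsRootDatum : Prop where
  free_X : Module.Free ℤ C.X
  finite_X : Module.Finite ℤ C.X
  free_Y : Module.Free ℤ C.Y
  finite_Y : Module.Finite ℤ C.Y
  perfect_left : Function.Bijective fun y : C.Y => C.pair y
  perfect_right : Function.Bijective fun x : C.X => C.pair.flip x
  pos_subset : C.pos ⊆ C.roots
  root_decomp : ∀ α ∈ C.roots, α ∈ C.pos ∨ -α ∈ C.pos
  pos_neg_disjoint : ∀ α ∈ C.pos, -α ∉ C.pos
  zero_not_root : (0 : C.X) ∉ C.roots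
  reduced : ∀ α ∈ C.roots, ∀ n : ℤ, n • α ∈ C.roots → n = 1 ∨ n = -1
  coroot_self : ∀ α ∈ C.roots, C.pair (C.coroot α) α = 2
  isReflection : ∀ α ∈ C.roots, ∃ s : C.W,
    (∀ x : C.X, s • x = x - C.pair (C.coroot α) x • α) ∧
    (∀ y : C.Y, s • y = y - C.pair y α • C.coroot α)
  weyl_gen : ∀ w : C.W, w ∈ Subgroup.closure {s : C.W | ∃ α ∈ C.roots,
    (∀ x : C.X, s • x = x - C.pair (C.coroot α) x • α) ∧
    (∀ y : C.Y, s • y = y - C.pair y α • C.coroot α)}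
  faithful_X : ∀ w : C.W, (∀ x : C.X, w • x = x) → w = 1
  faithful_Y : ∀ w : C.W, (∀ y : C.Y, w • y = y) → w = 1
  pair_inv : ∀ (w : C.W) (y : C.Y) (x : C.X), C.pair (w • y) (w • x) = C.pair y x
  roots_stable : ∀ (w : C.W), ∀ α ∈ C.roots, w • α ∈ C.roots
  smul_coroot : ∀ (w : C.W), ∀ α ∈ C.roots, w • C.coroot α = C.coroot (w • α)
  exists_regular_X : ∃ ξ : C.X, ∀ α ∈ C.pos, 0 < C.pair (C.coroot α) ξ
  exists_regular_Y : ∃ η : C.Y, ∀ α ∈ C.pos, 0 < C.pair η α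

/-- The length function of the finite Weyl group:
`ℓ(w) = #{α ∈ 𝔯₊ : w(α) ∈ −𝔯₊}`. -/
def lenW (w : C.W) : ℕ := (C.pos.filter fun α => -(w • α) ∈ C.pos).card

/-- `w` is the longest element of the finite Weyl group iff it maps every
positive root to a negative root. -/
def IsLongest (w : C.W) : Prop := ∀ α ∈ C.pos, -(w • α) ∈ C.pos

/-- The set `Y₊` of dominant cocharacters. -/
def Ypos : Set C.Y := {l | ∀ α ∈ C.pos, 0 ≤ C.pair l α}

/-- The set `Y₊₊` of strictly dominant cocharacters. -/
def Yppos : Set C.Y := {l | ∀ α ∈ C.pos, 0 < C.pair l α}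

/-- The action of `W` on `Multiplicative Y`, as a homomorphism to `MulAut`. -/
def φext : C.W →* MulAut (Multiplicative C.Y) where
  toFun w :=
    { toFun := fun y => Multiplicative.ofAdd (w • Multiplicative.toAdd y)
      invFun := fun y => Multiplicative.ofAdd (w⁻¹ • Multiplicative.toAdd y)
      left_inv := fun y => by simp
      right_inv := fun y => by simp
      map_mul' := fun a b => by simp [smul_add] }
  map_one' := by
    apply MulEquiv.ext
    intro y
    simp
  map_mul' w₁ w₂ := by
    apply MulEquiv.ext
    intro y
    simp [mul_smul]

/-- The extended affine Weyl group `W_ext = W_f ⋉ Y`. -/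
abbrev Wext : Type := Multiplicative C.Y ⋊[C.φext] C.W

/-- The translation element `t_λ ∈ W_ext` associated with `λ ∈ Y`. -/
def t (l : C.Y) : C.Wext := SemidirectProduct.inl (Multiplicative.ofAdd l)

/-- The canonical embedding of the finite Weyl group in `W_ext`. -/
def σ (w : C.W) : C.Wext := SemidirectProduct.inr w

/-- The length function on `W_ext`, defined by
`ℓ(w t_λ) = Σ_{α ∈ 𝔯₊, w(α) ∈ 𝔯₊} |⟨λ,α⟩| + Σ_{α ∈ 𝔯₊, w(α) ∈ −𝔯₊} |1 − ⟨λ,α⟩|`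
(an element `g` of the semidirect product equals `w t_λ` for `w = g.right`
and `λ = w⁻¹ • g.left`). -/
def len (g : C.Wext) : ℕ :=
  ∑ α ∈ C.pos,
    if g.right • α ∈ C.pos
      then (C.pair (g.right⁻¹ • Multiplicative.toAdd g.left) α).natAbs
      else ((1 : ℤ) - C.pair (g.right⁻¹ • Multiplicative.toAdd g.left) α).natAbs

/-- The coroot lattice `ℤ𝔯∨ ⊆ Y`. -/
def corootLattice : AddSubgroup C.Y := AddSubgroup.closure (C.coroot '' ↑C.roots)

/-- The affine Weyl group `W_aff = W_f ⋉ ℤ𝔯∨`, as a subgroup of `W_ext`. -/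
def Waff : Subgroup C.Wext :=
  Subgroup.closure ((fun l => C.t l) '' ↑C.corootLattice ∪ Set.range C.σ)

/-- The set of elements of length `1` of `W_aff` (the simple affine
reflections). -/
def Saff : Set C.Wext := {g | g ∈ C.Waff ∧ C.len g = 1}

/-- The set `Ω` of elements of length `0` of `W_ext`. -/
def OmegaSet : Set C.Wext := {g | C.len g = 0}

/-- The Bruhat order on `W_aff`: `u ≤ v` iff some reduced expression of `v`
(as a word in `S_aff`) admits a subword which is an expression of `u`. -/
def bruhatAff (u v : C.Wext) : Prop :=
  ∃ l : List C.Wext, (∀ s ∈ l, s ∈ C.Saff) ∧ l.prod = v ∧ l.length = C.len v ∧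
    ∃ l' : List C.Wext, l'.Sublist l ∧ l'.prod = u

/-- The Bruhat order on `W_ext`, extending the Bruhat order of `W_aff` by
`ω u ≤ ω' v` iff `ω = ω'` and `u ≤ v`, for `ω, ω' ∈ Ω` and `u, v ∈ W_aff`. -/
def bruhat (x y : C.Wext) : Prop :=
  ∃ ω u v : C.Wext, ω ∈ C.OmegaSet ∧ u ∈ C.Waff ∧ v ∈ C.Waff ∧
    x = ω * u ∧ y = ω * v ∧ C.bruhatAff u v

/-- The set `W_ext⁺` of `w ∈ W_ext` such that `ℓ(t_μ w) = ℓ(t_μ) + ℓ(w)` for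
every dominant `μ`. -/
def WextPlus : Set C.Wext :=
  {w | ∀ μ ∈ C.Ypos, C.len (C.t μ * w) = C.len (C.t μ) + C.len w}

/-- The semiinfinite order on `W_ext`. -/
def siLE (w y : C.Wext) : Prop :=
  ∃ μ : C.Y, C.t μ * w ∈ C.WextPlus ∧ C.t μ * y ∈ C.WextPlus ∧
    C.bruhat (C.t μ * w) (C.t μ * y)

/-- The rational vector space `ℚ ⊗ Y`. -/
abbrev QY : Type := ℚ ⊗[ℤ] C.Y

/-- The canonical map `Y → ℚ ⊗ Y`. -/
def ι : C.Y →ₗ[ℤ] C.QY := TensorProduct.mk ℤ ℚ C.Y 1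

/-- The finite set of positive coroots. -/
def posCoroots : Finset C.Y := C.pos.image C.coroot

/-- Half the sum of the positive coroots, as an element of `ℚ ⊗ Y`. -/
def rhoCheck : C.QY := (2⁻¹ : ℚ) ⊗ₜ[ℤ] (∑ β ∈ C.posCoroots, β)

/-- The set of Kostant partitions of `v ∈ ℚ ⊗ Y`: functions
`φ : 𝔯∨₊ → ℤ≥0` with `Σ_α φ(α)·α = v`. -/
def KostantSet (v : C.QY) : Set (↥C.posCoroots → ℕ) :=
  {φ | ∑ β : ↥C.posCoroots, (φ β) • C.ι (β : C.Y) = v}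

/-- Kostant's partition function. -/
def KostantP (v : C.QY) : ℕ := (C.KostantSet v).ncard

/-- The action of `w ∈ W` on `ℚ ⊗ Y`. -/
def actQ (w : C.W) : C.QY →ₗ[ℤ] C.QY :=
  LinearMap.lTensor ℚ ((DistribMulAction.toAddMonoidHom C.Y w).toIntLinearMap)

/-- The simple roots: positive roots which are not sums of two positive
roots. -/
def simpleRoots : Finset C.X :=
  C.pos.filter fun α => ¬ ∃ β ∈ C.pos, ∃ γ ∈ C.pos, α = β + γ

end Ctx

end SemiInf

namespace SemiInf
namespace Ctx

variable {C : Ctx}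

/-- Action of the extended affine Weyl group on affine functions. -/
def act (g : C.Wext) (a : C.X × ℤ) : C.X × ℤ :=
  (g.right • a.1, a.2 - C.pair (Multiplicative.toAdd g.left) (g.right • a.1))

theorem left_mul (g k : C.Wext) : Multiplicative.toAdd (g * k).left =
    Multiplicative.toAdd g.left + g.right • Multiplicative.toAdd k.left := by
  rfl

theorem left_inv' (g : C.Wext) : Multiplicative.toAdd (g⁻¹).left =
    - (g.right⁻¹ • Multiplicative.toAdd g.left) := by
  rw [SemidirectProduct.inv_left]
  change g.right⁻¹ • (- Multiplicative.toAdd g.left) = _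
  rw [smul_neg]

theorem pair_smul_left (h : C.IsRootDatum) (w : C.W) (y : C.Y) (x : C.X) :
    C.pair (w • y) x = C.pair y (w⁻¹ • x) := by
  rw [← h.pair_inv w y (w⁻¹ • x), smul_inv_smul]

theorem act_one (a : C.X × ℤ) : act (1 : C.Wext) a = a := by
  ext <;> simp [act]

theorem act_mul (h : C.IsRootDatum) (g k : C.Wext) (a : C.X × ℤ) :
    act (g * k) a = act g (act k a) := by
  unfold act
  rw [left_mul]
  ext
  · simp [mul_smul]
  · simp [mul_smul, pair_smul_left h]
    ring

theorem act_sub (g : C.Wext) (a b : C.X × ℤ) : act g (a - b) = act g a - act g b := by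
  ext
  · simp [act, smul_sub]
  · simp [act, smul_sub]
    ring

theorem act_add (g : C.Wext) (a b : C.X × ℤ) : act g (a + b) = act g a + act g b := by
  ext
  · simp [act, smul_add]
  · simp [act, smul_add]
    ring

/-- The action as an additive homomorphism. -/
def actHom (g : C.Wext) : (C.X × ℤ) →+ (C.X × ℤ) where
  toFun := act g
  map_zero' := by ext <;> simp [act]
  map_add' := act_add g

theorem act_zsmul (g : C.Wext) (n : ℤ) (a : C.X × ℤ) : act g (n • a) = n • act g a :=
  map_zsmul (actHom g) n a

theorem act_neg (g : C.Wext) (a : C.X × ℤ) : act g (-a) = - act g a :=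
  map_neg (actHom g) a

theorem act_faithful (h : C.IsRootDatum) (g : C.Wext)
    (hg : ∀ a, act g a = a) : g = 1 := by
  have h1 : g.right = 1 := by
    apply h.faithful_X
    intro x
    exact congrArg Prod.fst (hg (x, 0))
  have h2 : Multiplicative.toAdd g.left = 0 := by
    apply h.perfect_left.1
    ext x
    have := congrArg Prod.snd (hg (x, 0))
    simp [act, h1] at this
    simpa using this
  apply SemidirectProduct.ext
  · exact h2
  · exact h1

theorem act_inj (h : C.IsRootDatum) (g k : C.Wext)
    (hg : ∀ a, act g a = act k a) : g = k := by
  have : k⁻¹ * g = 1 := by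
    apply act_faithful h
    intro a
    rw [act_mul h, hg, ← act_mul h, inv_mul_cancel, act_one]
  rw [inv_mul_eq_one] at this
  exact this.symm

/-- Cartan pairing. -/
def cart (a b : C.X × ℤ) : ℤ := C.pair (C.coroot a.1) b.1

theorem cart_act (h : C.IsRootDatum) (g : C.Wext) (a b : C.X × ℤ) (ha : a.1 ∈ C.roots) :
    cart (act g a) (act g b) = cart a b := by
  simp only [cart, act]
  rw [← h.smul_coroot _ _ ha, h.pair_inv]

theorem cart_sub (a b c : C.X × ℤ) : cart a (b - c) = cart a b - cart a c := by
  simp [cart]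

theorem cart_zsmul (a b : C.X × ℤ) (n : ℤ) : cart a (n • b) = n * cart a b := by
  simp [cart]

theorem cart_self (h : C.IsRootDatum) (a : C.X × ℤ) (ha : a.1 ∈ C.roots) :
    cart a a = 2 := h.coroot_self _ ha

theorem root_act (h : C.IsRootDatum) (g : C.Wext) (a : C.X × ℤ) (ha : a.1 ∈ C.roots) :
    (act g a).1 ∈ C.roots := h.roots_stable _ _ ha

/-- `r` is the affine reflection in the affine root `a`. -/
def IsRefl (r : C.Wext) (a : C.X × ℤ) : Prop := ∀ b, act r b = b - cart a b • a

theorem isRefl_unique (h : C.IsRootDatum) {r r' : C.Wext} {a : C.X × ℤ}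
    (hr : IsRefl r a) (hr' : IsRefl r' a) : r = r' :=
  act_inj h _ _ fun b => by rw [hr, hr']

theorem isRefl_conj (h : C.IsRootDatum) (g : C.Wext) {r : C.Wext} {a : C.X × ℤ}
    (ha : a.1 ∈ C.roots) (hr : IsRefl r a) : IsRefl (g * r * g⁻¹) (act g a) := by
  intro b
  have hb : b = act g (act g⁻¹ b) := by rw [← act_mul h, mul_inv_cancel, act_one]
  rw [act_mul h, act_mul h, hr, act_sub, act_zsmul, ← hb]
  conv_rhs => rw [hb, cart_act h _ _ _ ha, ← hb]

theorem isRefl_sq (h : C.IsRootDatum) {r : C.Wext} {a : C.X × ℤ}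
    (ha : a.1 ∈ C.roots) (hr : IsRefl r a) : r * r = 1 := by
  apply act_faithful h
  intro b
  rw [act_mul h, hr, hr, cart_sub, cart_zsmul, cart_self h a ha]
  rw [show cart a b - cart a b * 2 = - cart a b by ring, neg_smul]
  abel

theorem ts_left (l : C.Y) (s : C.W) : Multiplicative.toAdd (C.t l * C.σ s).left = l := by
  simp [t, σ]

theorem ts_right (l : C.Y) (s : C.W) : (C.t l * C.σ s).right = s := by
  simp [t, σ]

theorem act_ts (l : C.Y) (s : C.W) (b : C.X × ℤ) :
    act (C.t l * C.σ s) b = (s • b.1, b.2 - C.pair l (s • b.1)) := by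
  unfold act
  rw [ts_left, ts_right]

theorem isRefl_mk (h : C.IsRootDatum) (β : C.X) (n : ℤ) (s : C.W)
    (hs : ∀ x : C.X, s • x = x - C.pair (C.coroot β) x • β) (hβ : β ∈ C.roots) :
    IsRefl (C.t (-(n • C.coroot β)) * C.σ s) (β, n) := by
  intro b
  have := h.coroot_self β hβ
  rw [act_ts]
  ext
  · simp [cart, hs]
  · simp [cart, hs, this]
    ring

theorem t_mem {l : C.Y} (hl : l ∈ C.corootLattice) : C.t l ∈ C.Waff :=
  Subgroup.subset_closure (Or.inl ⟨l, hl, rfl⟩)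

theorem σ_mem (w : C.W) : C.σ w ∈ C.Waff :=
  Subgroup.subset_closure (Or.inr ⟨w, rfl⟩)

theorem coroot_mem {β : C.X} (hβ : β ∈ C.roots) : C.coroot β ∈ C.corootLattice :=
  AddSubgroup.subset_closure ⟨β, hβ, rfl⟩

theorem exists_isRefl (h : C.IsRootDatum) (a : C.X × ℤ) (ha : a.1 ∈ C.roots) :
    ∃ r ∈ C.Waff, IsRefl r a := by
  obtain ⟨s, hs, -⟩ := h.isReflection _ ha
  refine ⟨_, ?_, isRefl_mk h a.1 a.2 s hs ha⟩
  exact mul_mem (t_mem (neg_mem (zsmul_mem (coroot_mem ha) _))) (σ_mem _)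

theorem coroot_neg (h : C.IsRootDatum) {β : C.X} (hβ : β ∈ C.roots) :
    -β ∈ C.roots ∧ C.coroot (-β) = - C.coroot β := by
  obtain ⟨s, hs, hs'⟩ := h.isReflection _ hβ
  have h1 : s • β = -β := by
    rw [hs, h.coroot_self _ hβ, two_smul]; abel
  constructor
  · rw [← h1]; exact h.roots_stable _ _ hβ
  · rw [← h1, ← h.smul_coroot _ _ hβ, hs', h.coroot_self _ hβ, two_smul]; abel

theorem isRefl_neg (h : C.IsRootDatum) {r : C.Wext} {a : C.X × ℤ}
    (ha : a.1 ∈ C.roots) (hr : IsRefl r a) : IsRefl r (-a) := by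
  intro b
  rw [hr]
  simp [cart, (coroot_neg h ha).2]

/-- Normality of the affine Weyl group. -/
theorem sub_smul_mem (h : C.IsRootDatum) (w : C.W) :
    ∀ y : C.Y, y - w • y ∈ C.corootLattice := by
  induction h.weyl_gen w using Subgroup.closure_induction with
  | mem s hs =>
    obtain ⟨α, hα, -, hs⟩ := hs
    intro y
    rw [hs, sub_sub_cancel]
    exact zsmul_mem (coroot_mem hα) _
  | one => intro y; simp
  | mul a b _ _ iha ihb =>
    intro y
    have := add_mem (ihb y) (iha (b • y))
    rw [mul_smul]
    simpa using this
  | inv a _ iha =>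
    intro y
    have := neg_mem (iha (a⁻¹ • y))
    simpa using this

theorem smul_mem_lattice (h : C.IsRootDatum) (w : C.W) {y : C.Y}
    (hy : y ∈ C.corootLattice) : w • y ∈ C.corootLattice := by
  have := sub_mem hy (sub_smul_mem h w y)
  simpa using this

theorem mem_Waff_of_left (g : C.Wext)
    (hg : Multiplicative.toAdd g.left ∈ C.corootLattice) : g ∈ C.Waff := by
  have : g = C.t (Multiplicative.toAdd g.left) * C.σ g.right := by
    apply SemidirectProduct.ext
    · simp [t, σ]
    · simp [t, σ]
  rw [this]
  exact mul_mem (t_mem hg) (σ_mem _)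

theorem mem_Waff (h : C.IsRootDatum) (g : C.Wext) :
    g ∈ C.Waff ↔ Multiplicative.toAdd g.left ∈ C.corootLattice := by
  refine ⟨fun hg => ?_, mem_Waff_of_left g⟩
  unfold Waff at hg
  induction hg using Subgroup.closure_induction with
  | mem s hs =>
    rcases hs with ⟨l, hl, rfl⟩ | ⟨w, rfl⟩
    · exact hl
    · exact zero_mem _
  | one => exact zero_mem _
  | mul a b _ _ iha ihb =>
    rw [left_mul]
    exact add_mem iha (smul_mem_lattice h _ ihb)
  | inv a _ iha =>
    rw [left_inv']
    exact neg_mem (smul_mem_lattice h _ iha)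

theorem Waff_normal (h : C.IsRootDatum) (g a : C.Wext) (ha : a ∈ C.Waff) :
    g * a * g⁻¹ ∈ C.Waff := by
  rw [mem_Waff h] at ha ⊢
  rw [left_mul, left_mul, left_inv', smul_neg, SemidirectProduct.mul_right, smul_smul]
  have := add_mem (sub_smul_mem h (g.right * a.right * g.right⁻¹) (Multiplicative.toAdd g.left))
    (smul_mem_lattice h g.right ha)
  convert this using 1
  abel

/-- Indicator of positive roots. -/
def cc (β : C.X) : ℤ := if β ∈ C.pos then 1 else 0

/-- The length cocycle. -/
def ff (g : C.Wext) (β : C.X) : ℤ :=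
  C.pair (Multiplicative.toAdd g.left) β + cc β - cc (g.right⁻¹ • β)

theorem ff_mul (h : C.IsRootDatum) (g k : C.Wext) (β : C.X) :
    ff (g * k) β = ff g β + ff k (g.right⁻¹ • β) := by
  unfold ff
  rw [left_mul, map_add, AddMonoidHom.add_apply, pair_smul_left h, SemidirectProduct.mul_right,
    mul_inv_rev, mul_smul]
  ring

theorem cc_neg (h : C.IsRootDatum) {β : C.X} (hβ : β ∈ C.roots) :
    cc (-β) = 1 - cc β := by
  unfold cc
  by_cases h1 : β ∈ C.pos
  · simp [h1, h.pos_neg_disjoint _ h1]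
  · have := (h.root_decomp _ hβ).resolve_left h1
    simp [h1, this]

theorem ff_neg (h : C.IsRootDatum) (g : C.Wext) {β : C.X} (hβ : β ∈ C.roots) :
    ff g (-β) = - ff g β := by
  unfold ff
  rw [smul_neg, cc_neg h hβ, cc_neg h (h.roots_stable _ _ hβ), map_neg]
  ring

theorem sum_roots_smul {M : Type*} [AddCommMonoid M] (h : C.IsRootDatum) (w : C.W) (F : C.X → M) :
    ∑ β ∈ C.roots, F (w • β) = ∑ β ∈ C.roots, F β := by
  refine Finset.sum_nbij' (fun β => w • β) (fun β => w⁻¹ • β) ?_ ?_ ?_ ?_ ?_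
  · exact fun β hβ => h.roots_stable _ _ hβ
  · exact fun β hβ => h.roots_stable _ _ hβ
  · intro β _; simp
  · intro β _; simp
  · intro β _; rfl

theorem roots_eq (h : C.IsRootDatum) : C.roots = C.pos ∪ C.pos.image (fun x => -x) := by
  ext β
  simp only [Finset.mem_union, Finset.mem_image]
  constructor
  · intro hβ
    rcases h.root_decomp _ hβ with h1 | h1
    · exact Or.inl h1
    · exact Or.inr ⟨_, h1, neg_neg _⟩
  · rintro (h1 | ⟨γ, h1, rfl⟩)
    · exact h.pos_subset h1
    · exact (coroot_neg h (h.pos_subset h1)).1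

theorem sum_roots (h : C.IsRootDatum) (F : C.X → ℕ) (hF : ∀ β ∈ C.roots, F (-β) = F β) :
    ∑ β ∈ C.roots, F β = 2 * ∑ β ∈ C.pos, F β := by
  rw [roots_eq h, Finset.sum_union, Finset.sum_image, two_mul]
  · congr 1
    exact Finset.sum_congr rfl fun β hβ => hF β (h.pos_subset hβ)
  · intro a _ b _ hab
    exact neg_injective hab
  · rw [Finset.disjoint_left]
    intro a ha hb
    rw [Finset.mem_image] at hb
    obtain ⟨b, hb, rfl⟩ := hb
    exact h.pos_neg_disjoint _ hb ha

theorem len_eq (h : C.IsRootDatum) (g : C.Wext) :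
    2 * C.len g = ∑ β ∈ C.roots, (ff g β).natAbs := by
  rw [← sum_roots_smul h g.right, sum_roots h (fun β => (ff g (g.right • β)).natAbs)]
  · congr 1
    unfold len
    refine Finset.sum_congr rfl fun α hα => ?_
    unfold ff
    rw [pair_smul_left h, inv_inv, inv_smul_smul]
    unfold cc
    split_ifs <;> simp
    omega
  · intro β hβ
    rw [smul_neg, ff_neg h _ (h.roots_stable _ _ hβ), Int.natAbs_neg]

theorem mem_Omega (h : C.IsRootDatum) (g : C.Wext) :
    g ∈ C.OmegaSet ↔ ∀ β ∈ C.roots, ff g β = 0 := by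
  have := len_eq h g
  change C.len g = 0 ↔ _
  have h2 : C.len g = 0 ↔ ∑ β ∈ C.roots, (ff g β).natAbs = 0 := by omega
  rw [h2, Finset.sum_eq_zero_iff]
  simp

theorem len_Omega_mul (h : C.IsRootDatum) (ω g : C.Wext) (hω : ω ∈ C.OmegaSet) :
    C.len (ω * g) = C.len g := by
  have h1 := len_eq h (ω * g)
  have h2 := len_eq h g
  rw [mem_Omega h] at hω
  have : ∑ β ∈ C.roots, (ff (ω * g) β).natAbs = ∑ β ∈ C.roots, (ff g β).natAbs := by
    rw [← sum_roots_smul h ω.right⁻¹ (fun β => (ff g β).natAbs)]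
    refine Finset.sum_congr rfl fun β hβ => ?_
    rw [ff_mul h, hω _ hβ, zero_add]
  omega

theorem len_mul_Omega (h : C.IsRootDatum) (ω g : C.Wext) (hω : ω ∈ C.OmegaSet) :
    C.len (g * ω) = C.len g := by
  have h1 := len_eq h (g * ω)
  have h2 := len_eq h g
  rw [mem_Omega h] at hω
  have : ∑ β ∈ C.roots, (ff (g * ω) β).natAbs = ∑ β ∈ C.roots, (ff g β).natAbs := by
    refine Finset.sum_congr rfl fun β hβ => ?_
    rw [ff_mul h, hω _ (h.roots_stable _ _ hβ), add_zero]
  omega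

theorem one_mem_Omega (h : C.IsRootDatum) : (1 : C.Wext) ∈ C.OmegaSet := by
  rw [mem_Omega h]
  intro β _
  simp [ff]

theorem inv_mem_Omega (h : C.IsRootDatum) (g : C.Wext) (hg : g ∈ C.OmegaSet) :
    g⁻¹ ∈ C.OmegaSet := by
  have := len_Omega_mul h g g⁻¹ hg
  rw [mul_inv_cancel] at this
  change C.len g⁻¹ = 0
  rw [← this]
  exact one_mem_Omega h

/-- Height of an affine root at an interior point of the fundamental alcove. -/
def ht (η : C.Y) (N : ℤ) (a : C.X × ℤ) : ℤ := N * a.2 - C.pair η a.1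

/-- `-η / N` lies in the interior of the (antidominant) fundamental alcove. -/
def Good (η : C.Y) (N : ℤ) : Prop := 0 < N ∧ ∀ α ∈ C.pos, 0 < C.pair η α ∧ C.pair η α < N

theorem exists_good (h : C.IsRootDatum) : ∃ (η : C.Y) (N : ℤ), Good η N := by
  obtain ⟨η, hη⟩ := h.exists_regular_Y
  refine ⟨η, 1 + ∑ α ∈ C.pos, C.pair η α, ?_, fun α hα => ⟨hη α hα, ?_⟩⟩
  · have := Finset.sum_nonneg fun α hα => (hη α hα).le
    omega
  · have := Finset.single_le_sum (f := fun α => C.pair η α) (fun α hα => (hη α hα).le) hα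
    omega

theorem ht_sub (η : C.Y) (N : ℤ) (a b : C.X × ℤ) : ht η N (a - b) = ht η N a - ht η N b := by
  simp [ht]; ring

theorem ht_neg (η : C.Y) (N : ℤ) (a : C.X × ℤ) : ht η N (-a) = - ht η N a := by
  simp [ht]; ring

theorem ht_zsmul (η : C.Y) (N n : ℤ) (a : C.X × ℤ) : ht η N (n • a) = n * ht η N a := by
  simp [ht]; ring

theorem ht_pos_iff (h : C.IsRootDatum) {η : C.Y} {N : ℤ} (hG : Good η N) (a : C.X × ℤ)
    (ha : a.1 ∈ C.roots) : 0 < ht η N a ↔ cc a.1 ≤ a.2 := by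
  obtain ⟨hN, hG⟩ := hG
  unfold ht cc
  split_ifs with h1
  · obtain ⟨h2, h3⟩ := hG _ h1
    constructor
    · intro h4; by_contra h5
      have : a.2 ≤ 0 := by omega
      nlinarith
    · intro h4; nlinarith
  · have h1 := (h.root_decomp _ ha).resolve_left h1
    obtain ⟨h2, h3⟩ := hG _ h1
    rw [map_neg] at h2 h3
    constructor
    · intro h4; by_contra h5
      have : a.2 ≤ -1 := by omega
      nlinarith
    · intro h4; nlinarith

theorem ht_ne (h : C.IsRootDatum) {η : C.Y} {N : ℤ} (hG : Good η N) (a : C.X × ℤ)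
    (ha : a.1 ∈ C.roots) : ht η N a ≠ 0 := by
  intro h0
  have h1 := ht_pos_iff h hG a ha
  have h2 := ht_pos_iff h hG (-a) (coroot_neg h ha).1
  rw [ht_neg, h0] at h2
  rw [h0] at h1
  simp only [Prod.fst_neg, Prod.snd_neg, cc_neg h ha] at h2
  omega

theorem Omega_pos (h : C.IsRootDatum) {η : C.Y} {N : ℤ} (hG : Good η N) (g : C.Wext)
    (hg : g ∈ C.OmegaSet) (a : C.X × ℤ) (ha : a.1 ∈ C.roots) (hp : 0 < ht η N a) :
    0 < ht η N (act g a) := by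
  rw [ht_pos_iff h hG _ ha] at hp
  rw [ht_pos_iff h hG _ (root_act h g a ha)]
  have := (mem_Omega h g).1 hg (g.right • a.1) (h.roots_stable _ _ ha)
  unfold ff at this
  rw [inv_smul_smul] at this
  simp only [act]
  omega

theorem not_Omega (h : C.IsRootDatum) {η : C.Y} {N : ℤ} (hG : Good η N) (g : C.Wext)
    (hg : g ∉ C.OmegaSet) : ∃ a : C.X × ℤ, a.1 ∈ C.roots ∧ 0 < ht η N a ∧
    ht η N (act g a) < 0 := by
  by_contra hcon
  push Not at hcon
  apply hg
  rw [mem_Omega h]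
  have key : ∀ β ∈ C.roots, ff g β ≤ 0 := by
    intro β hβ
    have hb := h.roots_stable g.right⁻¹ _ hβ
    have h1 := hcon (g.right⁻¹ • β, cc (g.right⁻¹ • β)) hb
      ((ht_pos_iff h hG _ hb).2 le_rfl)
    have h2 := root_act h g (g.right⁻¹ • β, cc (g.right⁻¹ • β)) hb
    have h3 := ht_ne h hG _ h2
    have h4 := (ht_pos_iff h hG _ h2).1 (by omega)
    simp only [act, smul_inv_smul] at h4
    unfold ff
    omega
  intro β hβ
  have h1 := key β hβ
  have h2 := key (-β) (coroot_neg h hβ).1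
  rw [ff_neg h _ hβ] at h2
  omega

/-! ### Surjectivity: minimising a distance -/

/-- Invariant form on `Y`. -/
def QQ (y z : C.Y) : ℤ := ∑ β ∈ C.roots, C.pair y β * C.pair z β

theorem QQ_smul (h : C.IsRootDatum) (w : C.W) (y z : C.Y) : QQ (w • y) (w • z) = QQ y z := by
  unfold QQ
  simp only [pair_smul_left h]
  exact sum_roots_smul h w⁻¹ (fun β => C.pair y β * C.pair z β)

theorem QQ_add_left (y y' z : C.Y) : QQ (y + y') z = QQ y z + QQ y' z := by
  simp [QQ, add_mul, Finset.sum_add_distrib]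

theorem QQ_comm (y z : C.Y) : QQ y z = QQ z y := by
  simp [QQ, mul_comm]

theorem QQ_zsmul_left (n : ℤ) (y z : C.Y) : QQ (n • y) z = n * QQ y z := by
  simp [QQ, Finset.mul_sum, mul_assoc]

theorem QQ_coroot (h : C.IsRootDatum) (y : C.Y) {γ : C.X} (hγ : γ ∈ C.roots) :
    2 * QQ y (C.coroot γ) = C.pair y γ * QQ (C.coroot γ) (C.coroot γ) := by
  obtain ⟨s, -, hs⟩ := h.isReflection _ hγ
  have h1 := QQ_smul h s y (C.coroot γ)
  have h2 : s • C.coroot γ = (-1 : ℤ) • C.coroot γ := by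
    rw [hs, h.coroot_self _ hγ, two_smul, neg_one_smul]; abel
  have h3 : s • y = y + (-(C.pair y γ)) • C.coroot γ := by
    rw [hs, neg_smul, sub_eq_add_neg]
  rw [h2, h3, QQ_add_left, QQ_zsmul_left, QQ_comm y, QQ_zsmul_left, QQ_comm _ ((-1 : ℤ) • _),
    QQ_zsmul_left, QQ_comm _ y] at h1
  linarith

theorem QQ_coroot_pos (h : C.IsRootDatum) {γ : C.X} (hγ : γ ∈ C.roots) :
    0 < QQ (C.coroot γ) (C.coroot γ) := by
  unfold QQ
  apply Finset.sum_pos'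
  · intro i _; exact mul_self_nonneg _
  · exact ⟨γ, hγ, by rw [h.coroot_self _ hγ]; norm_num⟩

/-- Displacement of the base point. -/
def disp (η : C.Y) (N : ℤ) (g : C.Wext) : C.Y :=
  N • Multiplicative.toAdd g.left - g.right • η + η

theorem disp_ht (h : C.IsRootDatum) (η : C.Y) (N : ℤ) (g : C.Wext) (a : C.X × ℤ) :
    ht η N (act g a) + C.pair (disp η N g) (act g a).1 = ht η N a := by
  simp [ht, act, disp, pair_smul_left h]
  ring

theorem disp_refl (h : C.IsRootDatum) (η : C.Y) (N : ℤ) (g r : C.Wext) (b : C.X × ℤ)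
    (hb : b.1 ∈ C.roots) (hr : IsRefl r b) :
    disp η N (r * g) = disp η N g - (ht η N b + C.pair (disp η N g) b.1) • C.coroot b.1 := by
  obtain ⟨s, hs, hs'⟩ := h.isReflection _ hb
  have h1 : r = C.t (-(b.2 • C.coroot b.1)) * C.σ s :=
    isRefl_unique h hr (isRefl_mk h b.1 b.2 s hs hb)
  have h2 : Multiplicative.toAdd r.left = -(b.2 • C.coroot b.1) := by
    rw [h1, ts_left]
  have h3 : r.right = s := by
    rw [h1, ts_right]
  unfold disp
  rw [left_mul, h2, h3, SemidirectProduct.mul_right, h3, mul_smul, hs', hs']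
  simp only [ht, map_add, map_sub, map_zsmul, AddMonoidHom.add_apply, AddMonoidHom.sub_apply,
    AddMonoidHom.coe_smul, Pi.smul_apply, smul_eq_mul]
  generalize g.right • η = ζ
  module

theorem exists_Omega (h : C.IsRootDatum) (g : C.Wext) : ∃ a ∈ C.Waff, a * g ∈ C.OmegaSet := by
  obtain ⟨η, N, hG⟩ := exists_good h
  suffices H : ∀ (n : ℕ) (g : C.Wext), (QQ (disp η N g) (disp η N g)).toNat = n →
      ∃ a ∈ C.Waff, a * g ∈ C.OmegaSet from H _ g rfl
  intro n
  induction n using Nat.strong_induction_on with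
  | _ n ih =>
    intro g hn
    by_cases hg : g ∈ C.OmegaSet
    · exact ⟨1, one_mem _, by rwa [one_mul]⟩
    obtain ⟨a, ha, hp, hm⟩ := not_Omega h hG g hg
    have hb := root_act h g a ha
    obtain ⟨r, hrW, hr⟩ := exists_isRefl h _ hb
    have hd := disp_ht h η N g a
    have hd2 := disp_refl h η N g r _ hb hr
    rw [hd] at hd2
    have hc := QQ_coroot h (disp η N g) hb
    have hcp := QQ_coroot_pos h hb
    have hnn : 0 ≤ QQ (disp η N (r * g)) (disp η N (r * g)) :=
      Finset.sum_nonneg fun i _ => mul_self_nonneg _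
    have hlt : QQ (disp η N (r * g)) (disp η N (r * g)) < QQ (disp η N g) (disp η N g) := by
      rw [hd2, sub_eq_add_neg, ← neg_smul, QQ_add_left, QQ_zsmul_left,
        QQ_comm _ (disp η N g + _), QQ_comm _ (disp η N g + _), QQ_add_left, QQ_add_left,
        QQ_zsmul_left, QQ_zsmul_left, QQ_comm (C.coroot _) (disp η N g)]
      set A := ht η N a
      set B := ht η N (act g a)
      set q := QQ (C.coroot (act g a).1) (C.coroot (act g a).1)
      set u := QQ (disp η N g) (C.coroot (act g a).1)
      set v := C.pair (disp η N g) (act g a).1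
      have h5 : 0 < A * (q * (-B)) := mul_pos hp (mul_pos hcp (by omega))
      have h6 : v = A - B := by omega
      rw [h6] at hc
      nlinarith
    obtain ⟨a', ha', h'⟩ := ih _ (by omega) (r * g) rfl
    exact ⟨a' * r, mul_mem ha' hrW, by rwa [mul_assoc]⟩

/-! ### A positive definite invariant form on `X` -/

/-- Existence of a positive definite invariant symmetric form on `X`. -/
theorem exists_form (h : C.IsRootDatum) : ∃ B : C.X →+ C.X →+ ℤ,
    (∀ x y, B x y = B y x) ∧ (∀ x, 0 ≤ B x x) ∧ (∀ x, B x x = 0 → x = 0) ∧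
    (∀ (w : C.W) x y, B (w • x) (w • y) = B x y) := by
  have := h.free_X
  have := h.finite_X
  let e := Module.Free.chooseBasis ℤ C.X
  let E : C.X → C.X → ℤ := fun x y => ∑ w : C.W, ∑ i, e.repr (w • x) i * e.repr (w • y) i
  let B : C.X →+ C.X →+ ℤ := AddMonoidHom.mk' (fun x => AddMonoidHom.mk' (E x) (by
      intro a b
      simp [E, mul_add, Finset.sum_add_distrib])) (by
      intro a b
      ext c
      simp [E, add_mul, Finset.sum_add_distrib])
  have hB : ∀ x y, B x y = E x y := fun _ _ => rfl
  refine ⟨B, ?_, ?_, ?_, ?_⟩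
  · intro x y
    simp only [hB, E, mul_comm]
  · intro x
    rw [hB]
    exact Finset.sum_nonneg fun w _ => Finset.sum_nonneg fun i _ => mul_self_nonneg _
  · intro x hx
    rw [hB] at hx
    have h1 := (Finset.sum_eq_zero_iff_of_nonneg
      (fun w _ => Finset.sum_nonneg fun i _ => mul_self_nonneg _)).1 hx 1 (Finset.mem_univ _)
    have h2 := (Finset.sum_eq_zero_iff_of_nonneg (fun i _ => mul_self_nonneg _)).1 h1
    apply e.repr.injective
    ext i
    have := h2 i (Finset.mem_univ _)
    simpa using this
  · intro w x y
    simp only [hB, E]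
    rw [← Equiv.sum_comp (Equiv.mulRight w) (fun v => ∑ i, e.repr (v • x) i * e.repr (v • y) i)]
    simp [mul_smul]

theorem form_root (h : C.IsRootDatum) (B : C.X →+ C.X →+ ℤ)
    (hs : ∀ x y, B x y = B y x)
    (hw : ∀ (w : C.W) x y, B (w • x) (w • y) = B x y) {β : C.X} (hβ : β ∈ C.roots) (x : C.X) :
    2 * B β x = C.pair (C.coroot β) x * B β β := by
  obtain ⟨s, hsx, -⟩ := h.isReflection _ hβ
  have h1 := hw s β x
  have h2 : s • β = - β := by
    rw [hsx, h.coroot_self _ hβ, two_smul]; abel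
  rw [h2, hsx] at h1
  simp at h1
  linarith

theorem two_smul_inj (h : C.IsRootDatum) {x y : C.X} (hxy : (2 : ℤ) • x = (2 : ℤ) • y) :
    x = y := by
  have := h.free_X
  exact smul_right_injective C.X (two_ne_zero : (2 : ℤ) ≠ 0) hxy

/-- Finite type condition on pairs of roots. -/
theorem finite_type (h : C.IsRootDatum) {β γ : C.X} (hβ : β ∈ C.roots) (hγ : γ ∈ C.roots)
    (hm : 0 < C.pair (C.coroot β) γ) :
    0 < C.pair (C.coroot γ) β ∧
    ((β = γ ∧ C.pair (C.coroot β) γ = 2 ∧ C.pair (C.coroot γ) β = 2) ∨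
      C.pair (C.coroot β) γ * C.pair (C.coroot γ) β ≤ 3) := by
  obtain ⟨B, hs, hnn, hz, hw⟩ := exists_form h
  have hpos : ∀ β ∈ C.roots, 0 < B β β := by
    intro β hβ
    refine lt_of_le_of_ne (hnn β) fun h0 => h.zero_not_root ?_
    rw [← hz β h0.symm]; exact hβ
  have h1 := form_root h B hs hw hβ γ
  have h2 := form_root h B hs hw hγ β
  have p1 := hpos β hβ
  have p2 := hpos γ hγ
  rw [hs γ β] at h2
  set m := C.pair (C.coroot β) γ with hmdef
  set k := C.pair (C.coroot γ) β with hkdef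
  have hk : 0 < k := by
    have : 0 < k * B γ γ := by rw [← h2, h1]; exact mul_pos hm p1
    exact pos_of_mul_pos_left this p2.le
  refine ⟨hk, ?_⟩
  have hv : B ((2 : ℤ) • γ - m • β) ((2 : ℤ) • γ - m • β) = (4 - m * k) * B γ γ := by
    simp only [map_sub, map_zsmul, AddMonoidHom.sub_apply, AddMonoidHom.coe_smul, Pi.smul_apply,
      smul_eq_mul, hs γ β]
    linear_combination (-m) * h1 - m * h2
  have h4 : m * k ≤ 4 := by
    have := hnn ((2 : ℤ) • γ - m • β)
    rw [hv] at this
    have := nonneg_of_mul_nonneg_left this p2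
    linarith
  by_cases h5 : m * k = 4
  · left
    have h6 : (2 : ℤ) • γ = m • β := by
      rw [← sub_eq_zero]
      apply hz
      rw [hv, h5]; ring
    have h7 : m ≤ 4 := by nlinarith
    have h8 : m = 1 ∨ m = 2 ∨ m = 3 ∨ m = 4 := by omega
    rcases h8 with h8 | h8 | h8 | h8
    · exfalso
      rw [h8, one_smul] at h6
      have := h.reduced γ hγ 2 (by rw [h6]; exact hβ)
      omega
    · rw [h8] at h5 h6
      exact ⟨(two_smul_inj h h6).symm, h8, by omega⟩
    · rw [h8] at h5; omega
    · exfalso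
      rw [h8] at h6
      have h9 : γ = (2 : ℤ) • β := by
        apply two_smul_inj h
        rw [h6, smul_smul]; norm_num
      have := h.reduced β hβ 2 (by rw [← h9]; exact hγ)
      omega
  · right; omega

/-- Simple affine roots. -/
def IsSimple (η : C.Y) (N : ℤ) (a : C.X × ℤ) : Prop :=
  a.1 ∈ C.roots ∧ 0 < ht η N a ∧
    ∀ b : C.X × ℤ, b.1 ∈ C.roots → 0 < ht η N b → ht η N (b - cart a b • a) < 0 → b = a

theorem root_refl (h : C.IsRootDatum) (a b : C.X × ℤ) (ha : a.1 ∈ C.roots) (hb : b.1 ∈ C.roots) :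
    (b - cart a b • a).1 ∈ C.roots := by
  obtain ⟨r, -, hr⟩ := exists_isRefl h a ha
  rw [← hr]
  exact root_act h _ _ hb

theorem not_simple (h : C.IsRootDatum) {η : C.Y} {N : ℤ} (hG : Good η N) (a : C.X × ℤ)
    (ha : a.1 ∈ C.roots) (hp : 0 < ht η N a) (hns : ¬ IsSimple η N a) :
    ∃ x : C.X × ℤ, x.1 ∈ C.roots ∧ |ht η N x| < ht η N a ∧
      |ht η N (a - cart x a • x)| < ht η N a := by
  have hex : ∃ b : C.X × ℤ, b.1 ∈ C.roots ∧ 0 < ht η N b ∧ ht η N (b - cart a b • a) < 0 ∧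
      b ≠ a := by
    by_contra hcon
    push Not at hcon
    exact hns ⟨ha, hp, hcon⟩
  obtain ⟨b, hb, hbp, hbn, hba⟩ := hex
  -- the two candidates
  have key : ∃ b c : C.X × ℤ, b.1 ∈ C.roots ∧ c.1 ∈ C.roots ∧ 0 < ht η N b ∧ 0 < ht η N c ∧
      b ≠ a ∧ ht η N b ≤ ht η N c ∧ c = cart a b • a - b := by
    have hc := root_refl h a b ha hb
    have hc' := (coroot_neg h hc).1
    have e1 : -(b - cart a b • a) = cart a b • a - b := by abel
    have hcr : (cart a b • a - b).1 ∈ C.roots := by rw [← e1]; exact hc'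
    have hcp : 0 < ht η N (cart a b • a - b) := by rw [← e1, ht_neg]; omega
    rcases le_total (ht η N b) (ht η N (cart a b • a - b)) with hle | hle
    · exact ⟨b, _, hb, hcr, hbp, hcp, hba, hle, rfl⟩
    · refine ⟨_, b, hcr, hb, hcp, hbp, ?_, hle, ?_⟩
      · intro h1
        have h2 : cart a (cart a b • a - b) = 2 := by rw [h1, cart_self h a ha]
        rw [cart_sub, cart_zsmul, cart_self h a ha] at h2
        have h3 : cart a b = 2 := by omega
        rw [h3, two_smul] at h1
        apply hba
        have : b = a + a - (a + a - b) := by abel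
        rw [this, h1]; abel
      · rw [cart_sub, cart_zsmul, cart_self h a ha]
        rw [show cart a b * 2 - cart a b = cart a b by ring]
        abel
  clear hba hbn hbp hb b
  obtain ⟨b, c, hb, hc, hbp, hcp, hba, hle, hcdef⟩ := key
  have hsum : ht η N c = cart a b * ht η N a - ht η N b := by
    rw [hcdef, ht_sub, ht_zsmul]
  have hm : 0 < cart a b := by
    have : 0 < cart a b * ht η N a := by omega
    exact pos_of_mul_pos_left this hp.le
  obtain ⟨hk, hcases⟩ := finite_type h ha hb hm
  change 0 < cart b a at hk
  rcases hcases with ⟨h1, h2, h3⟩ | h4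
  · change cart a b = 2 at h2
    change cart b a = 2 at h3
    have hlt : ht η N b ≠ ht η N a := by
      intro h5
      apply hba
      unfold ht at h5
      rw [← h1] at h5
      have : N * b.2 = N * a.2 := by omega
      exact Prod.ext h1.symm (mul_left_cancel₀ hG.1.ne' this)
    rw [h2] at hsum
    refine ⟨b, hb, ?_, ?_⟩
    · rw [abs_lt]; omega
    · rw [ht_sub, ht_zsmul, h3, abs_lt]; omega
  · change cart a b * cart b a ≤ 3 at h4
    have hm3 : cart a b ≤ 3 := by nlinarith
    have hk3 : cart b a ≤ 3 := by nlinarith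
    by_cases hm1 : cart a b = 1
    · rw [hm1] at hsum
      refine ⟨b, hb, ?_, ?_⟩
      · rw [abs_lt]; omega
      · rw [ht_sub, ht_zsmul, abs_lt]
        have : cart b a = 1 ∨ cart b a = 2 ∨ cart b a = 3 := by omega
        rcases this with h5 | h5 | h5 <;> rw [h5] <;> omega
    · have hm2 : 2 ≤ cart a b := by omega
      have hk1 : cart b a = 1 := by
        by_contra hk1
        have hk2 : 2 ≤ cart b a := by omega
        nlinarith
      have hx := root_refl h b a hb ha
      have hne := ht_ne h hG _ hx
      rw [ht_sub, ht_zsmul, hk1] at hne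
      by_cases hlt : ht η N b < ht η N a
      · refine ⟨b, hb, ?_, ?_⟩
        · rw [abs_lt]; omega
        · rw [ht_sub, ht_zsmul, hk1, abs_lt]; omega
      · have hm3' : cart a b = 3 := by
          have : cart a b = 2 ∨ cart a b = 3 := by omega
          rcases this with h5 | h5
          · rw [h5] at hsum; omega
          · exact h5
        rw [hm3'] at hsum
        refine ⟨_, hx, ?_, ?_⟩
        · rw [ht_sub, ht_zsmul, hk1, abs_lt]; omega
        · obtain ⟨r, -, hr⟩ := exists_isRefl h b hb
          have h6 : cart (a - cart b a • b) a = -1 := by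
            rw [← hr, ← cart_act h r _ _ (root_act h r a ha), ← act_mul h, isRefl_sq h hb hr,
              act_one, hr, cart_sub, cart_zsmul, hk1, hm3', cart_self h a ha]
            norm_num
          rw [h6, ht_sub, ht_zsmul, ht_sub, ht_zsmul, hk1, abs_lt]; omega

/-- The simple affine reflections. -/
def SS (η : C.Y) (N : ℤ) : Set C.Wext := {r | ∃ a, IsSimple η N a ∧ IsRefl r a}

theorem refl_mem (h : C.IsRootDatum) {η : C.Y} {N : ℤ} (hG : Good η N) :
    ∀ (n : ℕ) (a : C.X × ℤ) (r : C.Wext), a.1 ∈ C.roots → (ht η N a).natAbs = n → IsRefl r a →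
      r ∈ Subgroup.closure (SS η N) := by
  intro n
  induction n using Nat.strong_induction_on with
  | _ n ih =>
    have main : ∀ (a : C.X × ℤ) (r : C.Wext), a.1 ∈ C.roots → (ht η N a).natAbs = n →
        IsRefl r a → 0 < ht η N a → r ∈ Subgroup.closure (SS η N) := by
      intro a r ha hn hr hp
      by_cases hsim : IsSimple η N a
      · exact Subgroup.subset_closure ⟨a, hsim, hr⟩
      obtain ⟨x, hx, h1, h2⟩ := not_simple h hG a ha hp hsim
      obtain ⟨q, -, hq⟩ := exists_isRefl h x hx
      rw [abs_lt] at h1 h2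
      have hqm := ih _ (by omega) x q hx rfl hq
      have h3 := isRefl_conj h q ha hr
      have h4 : act q a = a - cart x a • x := hq a
      have h5 := ih (ht η N (act q a)).natAbs (by rw [h4]; omega) _ _ (root_act h q a ha) rfl h3
      have h6 : r = q⁻¹ * (q * r * q⁻¹) * q := by group
      rw [h6]
      exact mul_mem (mul_mem (inv_mem hqm) h5) hqm
    intro a r ha hn hr
    rcases lt_trichotomy 0 (ht η N a) with h1 | h1 | h1
    · exact main a r ha hn hr h1
    · exact absurd h1.symm (ht_ne h hG a ha)
    · exact main (-a) r (coroot_neg h ha).1 (by rw [ht_neg, Int.natAbs_neg, hn])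
        (isRefl_neg h ha hr) (by rw [ht_neg]; omega)

theorem Waff_le (h : C.IsRootDatum) {η : C.Y} {N : ℤ} (hG : Good η N) :
    C.Waff ≤ Subgroup.closure (SS η N) := by
  have hσ : ∀ w : C.W, C.σ w ∈ Subgroup.closure (SS η N) := by
    intro w
    induction h.weyl_gen w using Subgroup.closure_induction with
    | mem s hs =>
      obtain ⟨α, hα, hs, -⟩ := hs
      have := isRefl_mk h α 0 s hs hα
      have h2 := refl_mem h hG _ _ _ hα rfl this
      simpa [t] using h2
    | one => simp [σ, one_mem]
    | mul a b _ _ iha ihb =>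
      have : C.σ (a * b) = C.σ a * C.σ b := by simp [σ]
      rw [this]; exact mul_mem iha ihb
    | inv a _ iha =>
      have : C.σ a⁻¹ = (C.σ a)⁻¹ := by simp [σ]
      rw [this]; exact inv_mem iha
  unfold Waff
  rw [Subgroup.closure_le]
  rintro _ (⟨l, hl, rfl⟩ | ⟨w, rfl⟩)
  · change C.t l ∈ Subgroup.closure (SS η N)
    replace hl : l ∈ C.corootLattice := hl
    unfold corootLattice at hl
    induction hl using AddSubgroup.closure_induction with
    | mem x hx =>
      obtain ⟨β, hβ, rfl⟩ := hx
      obtain ⟨s, hs, -⟩ := h.isReflection _ hβ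
      have h1 := refl_mem h hG _ _ _ hβ rfl (isRefl_mk h β (-1) s hs hβ)
      have h2 := mul_mem h1 (inv_mem (hσ s))
      simpa using h2
    | zero => simp [t, one_mem]
    | add a b _ _ iha ihb =>
      have : C.t (a + b) = C.t a * C.t b := by simp [t]
      rw [this]; exact mul_mem iha ihb
    | neg a _ iha =>
      have : C.t (-a) = (C.t a)⁻¹ := by simp [t]
      rw [this]; exact inv_mem iha
  · exact hσ w

theorem exchange (h : C.IsRootDatum) {η : C.Y} {N : ℤ} (hG : Good η N)
    (a : C.X × ℤ) (s : C.Wext) (ha : IsSimple η N a) (hs : IsRefl s a) :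
    ∀ L : List C.Wext, (∀ r ∈ L, r ∈ SS η N) → ht η N (act L.prod a) < 0 →
      ∃ L' : List C.Wext, (∀ r ∈ L', r ∈ SS η N) ∧ L'.length + 1 = L.length ∧
        L'.prod = L.prod * s := by
  intro L
  induction L with
  | nil =>
    intro _ hn
    have := ha.2.1
    simp only [List.prod_nil, act_one] at hn
    omega
  | cons r L ih =>
    intro hL hn
    have hr := hL r (by simp)
    have hL' : ∀ r ∈ L, r ∈ SS η N := fun q hq => hL q (by simp [hq])
    have hroot := root_act h L.prod a ha.1
    rcases lt_trichotomy 0 (ht η N (act L.prod a)) with h1 | h1 | h1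
    · obtain ⟨a', ha', hra⟩ := hr
      rw [List.prod_cons, act_mul h, hra] at hn
      have heq := ha'.2.2 _ hroot h1 hn
      have hc := isRefl_conj h L.prod ha.1 hs
      rw [heq] at hc
      have h2 := isRefl_unique h hc hra
      have h3 := isRefl_sq h ha'.1 hra
      refine ⟨L, hL', by simp, ?_⟩
      rw [List.prod_cons, mul_assoc]
      have h4 : L.prod * s = r * L.prod := by rw [← h2]; group
      rw [h4, ← mul_assoc, h3, one_mul]
    · exact absurd h1.symm (ht_ne h hG _ hroot)
    · obtain ⟨L', h2, h3, h4⟩ := ih hL' h1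
      refine ⟨r :: L', ?_, by simp [h3], by simp [h4, mul_assoc]⟩
      intro q hq
      rcases List.mem_cons.1 hq with rfl | hq
      · exact hr
      · exact h2 q hq

theorem word_Omega (h : C.IsRootDatum) {η : C.Y} {N : ℤ} (hG : Good η N) :
    ∀ (n : ℕ) (L : List C.Wext), L.length = n → (∀ r ∈ L, r ∈ SS η N) →
      L.prod ∈ C.OmegaSet → L.prod = 1 := by
  intro n
  induction n using Nat.strong_induction_on with
  | _ n ih =>
    intro L hlen hL hO
    rcases List.eq_nil_or_concat L with rfl | ⟨M, s, rfl⟩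
    · simp
    rw [List.concat_eq_append] at *
    have hM : ∀ r ∈ M, r ∈ SS η N := fun q hq => hL q (by simp [hq])
    obtain ⟨a, ha, hs⟩ := hL s (by simp)
    have hprod : (M ++ [s]).prod = M.prod * s := by simp
    rw [hprod] at hO ⊢
    have h1 := Omega_pos h hG _ hO a ha.1 ha.2.1
    rw [act_mul h, hs, cart_self h a ha.1, two_smul,
      show a - (a + a) = -a by abel, act_neg, ht_neg] at h1
    obtain ⟨L', h2, h3, h4⟩ := exchange h hG a s ha hs M hM (by omega)
    rw [← h4] at hO ⊢
    simp at hlen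
    exact ih L'.length (by omega) L' rfl h2 hO

theorem exists_list_of_mem_closure' {G : Type*} [Group G] {S : Set G} {x : G}
    (hx : x ∈ Subgroup.closure S) :
    ∃ L : List G, (∀ r ∈ L, r ∈ S ∨ r⁻¹ ∈ S) ∧ L.prod = x := by
  rw [← Subgroup.mem_toSubmonoid, Subgroup.closure_toSubmonoid] at hx
  obtain ⟨L, hL, h⟩ := Submonoid.exists_list_of_mem_closure hx
  exact ⟨L, fun r hr => by simpa using hL r hr, h⟩

theorem Omega_inter (h : C.IsRootDatum) (g : C.Wext) (hg : g ∈ C.Waff) (hO : g ∈ C.OmegaSet) :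
    g = 1 := by
  obtain ⟨η, N, hG⟩ := exists_good h
  obtain ⟨L, hL, rfl⟩ := exists_list_of_mem_closure' (Waff_le h hG hg)
  refine word_Omega h hG _ L rfl ?_ hO
  intro r hr
  rcases hL r hr with h1 | h1
  · exact h1
  · obtain ⟨a, ha, hra⟩ := h1
    have h2 := isRefl_sq h ha.1 hra
    refine ⟨a, ha, ?_⟩
    have : r = r⁻¹ := by
      rw [← mul_inv_rev, inv_eq_one] at h2
      exact eq_inv_of_mul_eq_one_left h2
    rw [this]; exact hra

end Ctx
end SemiInf

/-- `Ω = {w : ℓ(w) = 0}` is a subgroup of `W_ext`, `W_aff` is normal in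
`W_ext`, multiplication `Ω × W_aff → W_ext` is a bijection, and conjugation by
any element of `Ω` preserves `S_aff` (in particular it preserves the length of
elements of `W_aff`). -/
theorem statement10 (C : SemiInf.Ctx) (h : C.IsRootDatum) :
    ((1 : C.Wext) ∈ C.OmegaSet ∧
      (∀ a ∈ C.OmegaSet, ∀ b ∈ C.OmegaSet, a * b ∈ C.OmegaSet) ∧
      (∀ a ∈ C.OmegaSet, a⁻¹ ∈ C.OmegaSet)) ∧
    (∀ g : C.Wext, ∀ a ∈ C.Waff, g * a * g⁻¹ ∈ C.Waff) ∧
    Function.Bijective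
      (fun p : C.OmegaSet × C.Waff => (p.1 : C.Wext) * (p.2 : C.Wext)) ∧
    (∀ ω ∈ C.OmegaSet, ∀ s ∈ C.Saff, ω * s * ω⁻¹ ∈ C.Saff) ∧
    (∀ ω ∈ C.OmegaSet, ∀ w ∈ C.Waff, C.len (ω * w * ω⁻¹) = C.len w) := by
  have hmul : ∀ a ∈ C.OmegaSet, ∀ b ∈ C.OmegaSet, a * b ∈ C.OmegaSet := by
    intro a ha b hb
    change C.len (a * b) = 0
    rw [SemiInf.Ctx.len_Omega_mul h a b ha]
    exact hb
  have hlen : ∀ ω ∈ C.OmegaSet, ∀ w, C.len (ω * w * ω⁻¹) = C.len w := by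
    intro ω hω w
    rw [SemiInf.Ctx.len_mul_Omega h _ _ (SemiInf.Ctx.inv_mem_Omega h ω hω),
      SemiInf.Ctx.len_Omega_mul h _ _ hω]
  refine ⟨⟨SemiInf.Ctx.one_mem_Omega h, hmul, SemiInf.Ctx.inv_mem_Omega h⟩,
    SemiInf.Ctx.Waff_normal h, ⟨?_, ?_⟩, ?_, fun ω hω w _ => hlen ω hω w⟩
  · rintro ⟨⟨ω, hω⟩, ⟨a, ha⟩⟩ ⟨⟨ω', hω'⟩, ⟨a', ha'⟩⟩ heq
    simp only at heq
    have h1 : ω'⁻¹ * ω = a' * a⁻¹ := by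
      rw [eq_mul_inv_iff_mul_eq, mul_assoc, heq, inv_mul_cancel_left]
    have h2 : ω'⁻¹ * ω = 1 := by
      apply SemiInf.Ctx.Omega_inter h
      · rw [h1]; exact mul_mem ha' (inv_mem ha)
      · exact hmul _ (SemiInf.Ctx.inv_mem_Omega h _ hω') _ hω
    have h3 : ω' = ω := inv_mul_eq_one.1 h2
    subst h3
    have h4 : a = a' := mul_left_cancel heq
    subst h4
    rfl
  · intro g
    obtain ⟨a, ha, hO⟩ := SemiInf.Ctx.exists_Omega h g
    have h1 := SemiInf.Ctx.Waff_normal h (a * g)⁻¹ a⁻¹ (inv_mem ha)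
    refine ⟨(⟨a * g, hO⟩, ⟨_, h1⟩), ?_⟩
    simp only
    group
  · intro ω hω s hs
    exact ⟨SemiInf.Ctx.Waff_normal h _ _ hs.1, by rw [hlen ω hω]; exact hs.2⟩
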